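/- Let K = ℚ(q), let L_n be the Laurent polynomial ring over K in n variables with fraction field F_n, let S_n act by permuting the variables, and for λ ∈ ℤ^n let P_λ := ∑_{σ∈S_n} σ( z^λ · ∏_{1≤i<j≤n} (1 − q⁻¹ z_i z_j⁻¹)·(1 − z_i z_j⁻¹)⁻¹ ) ∈ F_n. Then each P_λ with λ antidominant (λ₁ ≤ λ₂ ≤ ⋯ ≤ λ_n) lies in L_n, and the family (P_λ), indexed by the antidominant λ ∈ ℤ^n, is a K-basis (linearly independent and spanning) of the space of S_n-invariant elements of L_n. -/

import Mathlib

noncomputable section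

set_option synthInstance.maxHeartbeats 1000000

namespace InverseSatake

/-- The field `K = ℚ(q)` of rational functions over `ℚ`. -/
abbrev K : Type := RatFunc ℚ

/-- The variable `q` of `K = ℚ(q)`. -/
abbrev q : K := RatFunc.X

/-- `L_n`: the Laurent polynomial ring over `K` in `n` variables, i.e. the group algebra
of `ℤ^n` over `K`. -/
abbrev Lau (n : ℕ) : Type := AddMonoidAlgebra K (Fin n → ℤ)

instance (n : ℕ) : IsDomain (Lau n) := NoZeroDivisors.to_isDomain _

/-- `F_n`: the field of fractions of `L_n`. -/
abbrev FF (n : ℕ) : Type _ := FractionRing (Lau n)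

instance (n : ℕ) : Field (FF n) := inferInstance

variable {n : ℕ}

/-- The action of `σ ∈ S_n` on exponent vectors: `(σ·λ)ᵢ = λ_{σ⁻¹(i)}`. -/
def permAddEquiv (σ : Equiv.Perm (Fin n)) : (Fin n → ℤ) ≃+ (Fin n → ℤ) where
  toFun v := v ∘ σ.symm
  invFun v := v ∘ σ
  left_inv v := by ext i; simp
  right_inv v := by ext i; simp
  map_add' v w := rfl

/-- The action of `S_n` on `L_n` by permuting the variables. -/
def actL (σ : Equiv.Perm (Fin n)) : Lau n ≃ₐ[K] Lau n :=
  AddMonoidAlgebra.domCongr K K (permAddEquiv σ)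

/-- The action of `S_n` on `F_n` by permuting the variables. -/
def actF (σ : Equiv.Perm (Fin n)) : FF n ≃+* FF n :=
  IsFractionRing.ringEquivOfRingEquiv (actL σ).toRingEquiv

/-- The exponent vector of the Laurent monomial `zᵢ z_j⁻¹`. -/
def eu (i j : Fin n) : Fin n → ℤ := Pi.single i 1 - Pi.single j 1

/-- The canonical embedding `L_n → F_n`. -/
def alg : Lau n →+* FF n := algebraMap (Lau n) (FF n)

/-- `P_λ = ∑_{σ ∈ S_n} σ( z^λ ∏_{i<j} (1 − q⁻¹ zᵢzⱼ⁻¹)(1 − zᵢzⱼ⁻¹)⁻¹ ) ∈ F_n`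
(Macdonald's formula for the group `GL_n`). -/
def Pfun (lam : Fin n → ℤ) : FF n :=
  ∑ σ : Equiv.Perm (Fin n),
    actF σ (alg (AddMonoidAlgebra.single lam 1) *
      ∏ i : Fin n, ∏ j ∈ Finset.Ioi i,
        (alg (1 - AddMonoidAlgebra.single (eu i j) q⁻¹)
          * (alg (1 - AddMonoidAlgebra.single (eu i j) 1))⁻¹))

/-- The `K`-submodule of `S_n`-invariant elements of `L_n`. -/
def invariants (n : ℕ) : Submodule K (Lau n) where
  carrier := {p | ∀ σ : Equiv.Perm (Fin n), actL σ p = p}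
  add_mem' hp hq σ := by rw [map_add, hp σ, hq σ]
  zero_mem' σ := map_zero _
  smul_mem' c p hp σ := by rw [map_smul, hp σ]

/-! ### Suffix sums and the dominance order on exponents -/

/-- The sum of the entries of `v` with index at least `k`. -/
def sfx (k : ℕ) : (Fin n → ℤ) →+ ℤ where
  toFun v := ∑ i : Fin n, (if k ≤ i.val then 1 else 0) * v i
  map_zero' := by simp
  map_add' v w := by simp [mul_add, Finset.sum_add_distrib]

lemma sfx_apply (k : ℕ) (v : Fin n → ℤ) :
    sfx k v = ∑ i : Fin n, (if k ≤ i.val then 1 else 0) * v i := rfl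

lemma sfx_succ (i : Fin n) (v : Fin n → ℤ) : sfx i.val v = v i + sfx (i.val + 1) v := by
  have : v i = ∑ j : Fin n, (if j = i then 1 else 0) * v j := by simp
  rw [this, sfx_apply, sfx_apply, ← Finset.sum_add_distrib]
  refine Finset.sum_congr rfl fun j _ => ?_
  rw [← add_mul]
  congr 1
  have : j = i ↔ j.val = i.val := Fin.ext_iff
  simp only [this]
  split_ifs <;> omega

/-- The dominance order on exponents. -/
def dle (a b : Fin n → ℤ) : Prop := (∀ k, sfx k a ≤ sfx k b) ∧ sfx 0 a = sfx 0 b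

lemma dle_refl (a : Fin n → ℤ) : dle a a := ⟨fun _ => le_rfl, rfl⟩

lemma dle_trans {a b c : Fin n → ℤ} (h : dle a b) (h' : dle b c) : dle a c :=
  ⟨fun k => (h.1 k).trans (h'.1 k), h.2.trans h'.2⟩

lemma dle_add {a b c d : Fin n → ℤ} (h : dle a b) (h' : dle c d) : dle (a + c) (b + d) :=
  ⟨fun k => by rw [map_add, map_add]; exact add_le_add (h.1 k) (h'.1 k),
    by rw [map_add, map_add, h.2, h'.2]⟩

lemma eq_of_sfx {a b : Fin n → ℤ} (h : ∀ k, sfx k a = sfx k b) : a = b := by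
  ext i
  have h1 := sfx_succ i a
  have h2 := sfx_succ i b
  have h3 := h i.val
  have h4 := h (i.val + 1)
  omega

lemma dle_antisymm {a b : Fin n → ℤ} (h : dle a b) (h' : dle b a) : a = b :=
  eq_of_sfx fun k => le_antisymm (h.1 k) (h'.1 k)

lemma dle_of_add_right {a b c : Fin n → ℤ} (h : dle (a + c) (b + c)) : dle a b :=
  ⟨fun k => by have := h.1 k; rw [map_add, map_add] at this; omega,
    by have := h.2; rw [map_add, map_add] at this; omega⟩

lemma dle_perm {a : Fin n → ℤ} (ha : Monotone a) (σ : Equiv.Perm (Fin n)) :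
    dle (a ∘ σ) a := by
  constructor
  · intro k
    refine Monovary.sum_mul_comp_perm_le_sum_mul (σ := σ)
      (f := fun i : Fin n => if k ≤ i.val then (1 : ℤ) else 0) (g := a) ?_
    refine Monotone.monovary ?_ ha
    intro i j hij
    have : i.val ≤ j.val := hij
    dsimp only
    split_ifs <;> omega
  · simp [sfx_apply, Equiv.sum_comp σ a]

lemma sfx_single (k : ℕ) (i : Fin n) :
    sfx k (Pi.single i (1 : ℤ)) = if k ≤ i.val then 1 else 0 := by
  rw [sfx_apply]
  simp [Pi.single_apply]

lemma dle_single {i j : Fin n} (h : i ≤ j) :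
    dle (Pi.single i (1 : ℤ)) (Pi.single j 1) := by
  have : i.val ≤ j.val := h
  constructor
  · intro k
    rw [sfx_single, sfx_single]
    split_ifs <;> omega
  · rw [sfx_single, sfx_single]; simp

lemma finite_dle (b : Fin n → ℤ) : {a : Fin n → ℤ | Monotone a ∧ dle a b}.Finite := by
  rcases Nat.eq_zero_or_pos n with rfl | hn
  · exact Set.toFinite _
  set l : Fin n := ⟨n - 1, by omega⟩ with hl
  set B := sfx (n - 1) b
  have last : ∀ a : Fin n → ℤ, sfx (n - 1) a = a l := by
    intro a
    have := sfx_succ l a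
    have h2 : sfx (l.val + 1) a = 0 := by
      rw [sfx_apply]
      refine Finset.sum_eq_zero fun i _ => ?_
      have := i.isLt
      rw [if_neg (by simp only [hl]; omega)]; simp
    have h3 : l.val = n - 1 := rfl
    rw [h3] at this h2
    omega
  refine (Set.finite_Icc (fun _ : Fin n => sfx 0 b - (n - 1 : ℕ) * B) (fun _ => B)).subset ?_
  rintro a ⟨ha, hab⟩
  have hle : ∀ i, a i ≤ B := by
    intro i
    have h1 : a i ≤ a l := ha (by rw [Fin.le_def]; simp only [hl]; omega)
    have h2 := hab.1 (n - 1)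
    rw [last a] at h2
    omega
  refine ⟨fun i => ?_, hle⟩
  have h0 : sfx 0 a = ∑ j, a j := by simp [sfx_apply]
  have h1 := Finset.add_sum_erase Finset.univ a (Finset.mem_univ i)
  have h2 : ∑ j ∈ Finset.univ.erase i, a j ≤ (Finset.univ.erase i).card • B :=
    Finset.sum_le_card_nsmul _ _ _ fun j _ => hle j
  rw [Finset.card_erase_of_mem (Finset.mem_univ i), Finset.card_univ, Fintype.card_fin,
    nsmul_eq_mul] at h2
  have := hab.2
  dsimp only
  linarith

/-! ### The vector rho -/

lemma two_sum_Ioi (f : Fin n → Fin n → ℤ) (hf : ∀ i j, f i j = f j i) :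
    2 * ∑ i, ∑ j ∈ Finset.Ioi i, f i j = ∑ i, ∑ j, if i = j then 0 else f i j := by
  have h1 : ∑ i, ∑ j ∈ Finset.Ioi i, f i j = ∑ i, ∑ j, if i < j then f i j else 0 := by
    refine Finset.sum_congr rfl fun i _ => ?_
    rw [← Finset.sum_filter]
    refine Finset.sum_congr ?_ fun _ _ => rfl
    ext j; simp
  have h2 : ∑ i, ∑ j, (if i < j then f i j else 0) = ∑ i, ∑ j, if j < i then f i j else 0 := by
    rw [Finset.sum_comm]
    refine Finset.sum_congr rfl fun i _ => Finset.sum_congr rfl fun j _ => ?_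
    rw [hf]
  rw [two_mul]
  nth_rewrite 2 [h1]
  rw [h1, h2, ← h2, h2]
  nth_rewrite 1 [← h2]
  rw [← Finset.sum_add_distrib]
  refine Finset.sum_congr rfl fun i _ => ?_
  rw [← Finset.sum_add_distrib]
  refine Finset.sum_congr rfl fun j _ => ?_
  rcases lt_trichotomy i j with h | h | h
  · simp [h, h.not_gt, h.ne]
  · simp [h]
  · simp [h, h.not_gt, h.ne']

lemma sum_Ioi_perm (f : Fin n → Fin n → ℤ) (hf : ∀ i j, f i j = f j i)
    (σ : Equiv.Perm (Fin n)) :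
    ∑ i, ∑ j ∈ Finset.Ioi i, f (σ i) (σ j) = ∑ i, ∑ j ∈ Finset.Ioi i, f i j := by
  have h1 := two_sum_Ioi f hf
  have h2 := two_sum_Ioi (fun i j => f (σ i) (σ j)) (fun i j => hf _ _)
  have h3 : (∑ i, ∑ j, if i = j then 0 else f (σ i) (σ j)) =
      ∑ i, ∑ j, if i = j then 0 else f i j := by
    rw [← Equiv.sum_comp σ (fun i => ∑ j, if i = j then 0 else f i j)]
    refine Finset.sum_congr rfl fun i _ => ?_
    rw [← Equiv.sum_comp σ (fun j => if σ i = j then 0 else f (σ i) j)]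
    simp
  omega

/-- The vector `ρ = (0, 1, …, n - 1)`. -/
def rho : Fin n → ℤ := fun i => i.val

lemma sum_max_perm (σ : Equiv.Perm (Fin n)) :
    ∑ i, ∑ j ∈ Finset.Ioi i, (Pi.single (max (σ i) (σ j)) (1 : ℤ) : Fin n → ℤ) = rho := by
  ext k
  simp only [Finset.sum_apply]
  rw [sum_Ioi_perm (fun i j => (Pi.single (max i j) (1 : ℤ) : Fin n → ℤ) k)
    (fun i j => by rw [max_comm]) σ]
  have : ∀ i : Fin n, ∑ j ∈ Finset.Ioi i, (Pi.single (max i j) (1 : ℤ) : Fin n → ℤ) k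
      = if i < k then 1 else 0 := by
    intro i
    have : ∀ j ∈ Finset.Ioi i, (Pi.single (max i j) (1 : ℤ) : Fin n → ℤ) k
        = if k = j then 1 else 0 := by
      intro j hj
      rw [max_eq_right (Finset.mem_Ioi.1 hj).le, Pi.single_apply]
    rw [Finset.sum_congr rfl this]
    simp
  simp only [this]
  simp only [rho, Finset.sum_boole]
  have : (Finset.univ.filter fun i : Fin n => i < k) = Finset.Iio k := by ext; simp
  rw [this]; simp

lemma strictMono_add_rho {a : Fin n → ℤ} (ha : Monotone a) : StrictMono (a + rho) := by
  intro i j h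
  have h1 := ha h.le
  have h2 : i.val < j.val := h
  simp only [Pi.add_apply, rho]
  omega

lemma monotone_sub_rho {a : Fin n → ℤ} (ha : StrictMono a) : Monotone (a - rho) := by
  have key : ∀ d : ℕ, ∀ i j : Fin n, i.val + d = j.val → a i + d ≤ a j := by
    intro d
    induction d with
    | zero =>
      intro i j h
      have : i = j := Fin.ext (by omega)
      simp [this]
    | succ d ih =>
      intro i j h
      have h1 := ih i ⟨i.val + d, by have := j.isLt; omega⟩ rfl
      have h2 : a ⟨i.val + d, by have := j.isLt; omega⟩ < a j :=
        ha (by rw [Fin.lt_def]; dsimp only; omega)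
      push_cast
      omega
  intro i j h
  have h2 : i.val ≤ j.val := h
  have := key (j.val - i.val) i j (by omega)
  simp only [Pi.sub_apply, rho]
  omega

/-! ### Leading terms -/

/-- All exponents of `p` are dominated by `a`, and the coefficient at `a` is `c`. -/
def Lead (p : Lau n) (a : Fin n → ℤ) (c : K) : Prop :=
  (∀ v, p.coeff v ≠ 0 → dle v a) ∧ p.coeff a = c

lemma Lead.mul {p r : Lau n} {a b : Fin n → ℤ} {c d : K} (hp : Lead p a c) (hr : Lead r b d) :
    Lead (p * r) (a + b) (c * d) := by
  classical
  constructor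
  · intro v hv
    have h1 : v ∈ (p * r).coeff.support := Finsupp.mem_support_iff.2 hv
    have h2 := AddMonoidAlgebra.support_coeff_mul_subset p r h1
    obtain ⟨x, hx, y, hy, rfl⟩ := Finset.mem_add.1 h2
    exact dle_add (hp.1 x (Finsupp.mem_support_iff.1 hx)) (hr.1 y (Finsupp.mem_support_iff.1 hy))
  · rw [← hp.2, ← hr.2]
    apply AddMonoidAlgebra.coeff_mul_add_of_uniqueAdd
    intro x y hx hy hxy
    have h1 := hp.1 x (Finsupp.mem_support_iff.1 hx)
    have h2 := hr.1 y (Finsupp.mem_support_iff.1 hy)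
    have h3 : ∀ k, sfx k x + sfx k y = sfx k a + sfx k b := by
      intro k; rw [← map_add, ← map_add, hxy]
    constructor
    · refine eq_of_sfx fun k => ?_
      have := h1.1 k; have := h2.1 k; have := h3 k; omega
    · refine eq_of_sfx fun k => ?_
      have := h1.1 k; have := h2.1 k; have := h3 k; omega

lemma Lead.single (a : Fin n → ℤ) (c : K) : Lead (AddMonoidAlgebra.single a c) a c := by
  constructor
  · intro v hv
    rw [AddMonoidAlgebra.coeff_single, Finsupp.single_apply] at hv
    have : a = v := by by_contra h; simp [h] at hv
    rw [this]; exact dle_refl _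
  · simp

lemma Lead.one : Lead (1 : Lau n) 0 1 := Lead.single 0 1

lemma Lead.prod {ι : Type*} (s : Finset ι) {p : ι → Lau n} {a : ι → Fin n → ℤ} {c : ι → K}
    (h : ∀ i ∈ s, Lead (p i) (a i) (c i)) : Lead (∏ i ∈ s, p i) (∑ i ∈ s, a i) (∏ i ∈ s, c i) := by
  classical
  induction s using Finset.induction_on with
  | empty => exact Lead.one
  | insert x s hx ih =>
    rw [Finset.prod_insert hx, Finset.sum_insert hx, Finset.prod_insert hx]
    exact (h x (Finset.mem_insert_self _ _)).mul
      (ih fun i hi => h i (Finset.mem_insert_of_mem hi))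

lemma Lead.sum {ι : Type*} (s : Finset ι) {p : ι → Lau n} {a : Fin n → ℤ} {c : ι → K}
    (h : ∀ i ∈ s, Lead (p i) a (c i)) : Lead (∑ i ∈ s, p i) a (∑ i ∈ s, c i) := by
  constructor
  · intro v hv
    rw [AddMonoidAlgebra.coeff_sum, Finsupp.finsetSum_apply] at hv
    obtain ⟨i, hi, hne⟩ := Finset.exists_ne_zero_of_sum_ne_zero hv
    exact (h i hi).1 v hne
  · rw [AddMonoidAlgebra.coeff_sum, Finsupp.finsetSum_apply]
    exact Finset.sum_congr rfl fun i hi => (h i hi).2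

lemma Lead.smul {p : Lau n} {a : Fin n → ℤ} {c : K} (hp : Lead p a c) (d : K) :
    Lead (d • p) a (d * c) := by
  constructor
  · intro v hv
    refine hp.1 v fun h => hv ?_
    rw [AddMonoidAlgebra.coeff_smul_apply, h, smul_zero]
  · rw [AddMonoidAlgebra.coeff_smul_apply, hp.2, smul_eq_mul]

lemma Lead.of_dle {p : Lau n} {a b : Fin n → ℤ} {c : K} (hp : Lead p a c) (h : dle a b)
    (hab : a ≠ b) : Lead p b 0 := by
  constructor
  · intro v hv
    exact dle_trans (hp.1 v hv) h
  · by_contra hne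
    exact hab (dle_antisymm h (hp.1 b hne))

lemma Lead.add {p r : Lau n} {a : Fin n → ℤ} {c d : K} (hp : Lead p a c) (hr : Lead r a d) :
    Lead (p + r) a (c + d) := by
  constructor
  · intro v hv
    by_cases h : p.coeff v = 0
    · refine hr.1 v fun h' => hv ?_
      rw [AddMonoidAlgebra.coeff_add, Finsupp.add_apply, h, h', add_zero]
    · exact hp.1 v h
  · rw [AddMonoidAlgebra.coeff_add, Finsupp.add_apply, hp.2, hr.2]

/-! ### The action -/

lemma coeff_actL (σ : Equiv.Perm (Fin n)) (p : Lau n) (v : Fin n → ℤ) :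
    (actL σ p).coeff v = p.coeff (v ∘ σ) := by
  unfold actL
  rw [AddMonoidAlgebra.coeff_domCongr]
  rfl

lemma actL_single (σ : Equiv.Perm (Fin n)) (v : Fin n → ℤ) (c : K) :
    actL σ (AddMonoidAlgebra.single v c) = AddMonoidAlgebra.single (v ∘ σ.symm) c := by
  unfold actL
  rw [AddMonoidAlgebra.domCongr_single]
  rfl

lemma actL_mul (τ σ : Equiv.Perm (Fin n)) (p : Lau n) :
    actL τ (actL σ p) = actL (τ * σ) p := by
  apply AddMonoidAlgebra.ext
  ext v
  rw [coeff_actL, coeff_actL, coeff_actL]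
  rfl

lemma actF_alg (σ : Equiv.Perm (Fin n)) (p : Lau n) : actF σ (alg p) = alg (actL σ p) :=
  IsFractionRing.ringEquivOfRingEquiv_algebraMap _ _

/-- The sign of a permutation, as a scalar. -/
def sg (σ : Equiv.Perm (Fin n)) : K := ((Equiv.Perm.sign σ : ℤ) : K)

lemma sg_mul (σ τ : Equiv.Perm (Fin n)) : sg (σ * τ) = sg σ * sg τ := by
  simp [sg]

lemma sg_mul_self (σ : Equiv.Perm (Fin n)) : sg σ * sg σ = 1 := by
  unfold sg
  rw [← Int.cast_mul, ← Units.val_mul, Int.units_mul_self]; simp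

lemma sg_smul (σ : Equiv.Perm (Fin n)) (p : Lau n) :
    sg σ • p = ((Equiv.Perm.sign σ : ℤ) : Lau n) * p := by
  unfold sg
  rw [Int.cast_smul_eq_zsmul, zsmul_eq_mul]

/-- The alternating Laurent polynomials. -/
def alt (n : ℕ) : Submodule K (Lau n) where
  carrier := {p | ∀ σ : Equiv.Perm (Fin n), actL σ p = sg σ • p}
  add_mem' hp hq σ := by rw [map_add, hp σ, hq σ, smul_add]
  zero_mem' σ := by rw [map_zero, smul_zero]
  smul_mem' c p hp σ := by rw [map_smul, hp σ, smul_comm]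

lemma mem_alt {p : Lau n} : p ∈ alt n ↔ ∀ σ : Equiv.Perm (Fin n), actL σ p = sg σ • p := Iff.rfl

lemma mem_invariants {p : Lau n} :
    p ∈ invariants n ↔ ∀ σ : Equiv.Perm (Fin n), actL σ p = p := Iff.rfl

lemma alt_eq_zero {p : Lau n} (hp : p ∈ alt n) (h : ∀ v, StrictMono v → p.coeff v = 0) :
    p = 0 := by
  apply AddMonoidAlgebra.ext
  ext v
  rw [AddMonoidAlgebra.coeff_zero, Finsupp.zero_apply]
  have key : ∀ σ : Equiv.Perm (Fin n), p.coeff (v ∘ σ) = sg σ * p.coeff v := by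
    intro σ
    rw [← coeff_actL, mem_alt.1 hp σ, AddMonoidAlgebra.coeff_smul_apply, smul_eq_mul]
  by_cases hv : Function.Injective v
  · have h1 : StrictMono (v ∘ Tuple.sort v) :=
      (Tuple.monotone_sort v).strictMono_of_injective
        (hv.comp (Tuple.sort v).injective)
    have h2 := key (Tuple.sort v)
    rw [h _ h1] at h2
    have h3 := sg_mul_self (Tuple.sort v)
    calc p.coeff v = sg (Tuple.sort v) * (sg (Tuple.sort v) * p.coeff v) := by
          rw [← mul_assoc, h3, one_mul]
      _ = 0 := by rw [← h2, mul_zero]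
  · simp only [Function.Injective, not_forall] at hv
    obtain ⟨i, j, hij, hne⟩ := hv
    have h2 := key (Equiv.swap i j)
    have h3 : v ∘ Equiv.swap i j = v := by
      ext k
      simp only [Function.comp_apply, Equiv.swap_apply_def]
      split_ifs with h1 h2
      · rw [h1, hij]
      · rw [h2, hij]
      · rfl
    rw [h3] at h2
    have h4 : sg (Equiv.swap i j) = -1 := by
      simp [sg, Equiv.Perm.sign_swap hne]
    rw [h4, neg_one_mul] at h2
    exact self_eq_neg.1 h2

/-! ### The products -/

/-- The polynomial `z_j - t z_i`. -/
def fac (t : K) (i j : Fin n) : Lau n :=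
  AddMonoidAlgebra.single (Pi.single j 1) 1 - AddMonoidAlgebra.single (Pi.single i 1) t

/-- The product of the `z_j - t z_i` over `i < j`. -/
def DD (t : K) : Lau n := ∏ i : Fin n, ∏ j ∈ Finset.Ioi i, fac t i j

lemma single_comp_symm (σ : Equiv.Perm (Fin n)) (i : Fin n) :
    (Pi.single i (1 : ℤ) : Fin n → ℤ) ∘ σ.symm = Pi.single (σ i) 1 := by
  ext k
  simp only [Function.comp_apply, Pi.single_apply, Equiv.symm_apply_eq]

lemma actL_fac (σ : Equiv.Perm (Fin n)) (t : K) (i j : Fin n) :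
    actL σ (fac t i j) = fac t (σ i) (σ j) := by
  unfold fac
  rw [map_sub, actL_single, actL_single, single_comp_symm, single_comp_symm]

lemma actL_DD (σ : Equiv.Perm (Fin n)) (t : K) :
    actL σ (DD t) = ∏ i : Fin n, ∏ j ∈ Finset.Ioi i, fac t (σ i) (σ j) := by
  unfold DD
  simp only [map_prod, actL_fac]

lemma actL_DD_one (σ : Equiv.Perm (Fin n)) : actL σ (DD 1 : Lau n) = sg σ • DD 1 := by
  rw [actL_DD, sg_smul]
  refine Equiv.Perm.prod_Ioi_comp_eq_sign_mul_prod σ ?_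
  intro i j
  simp [fac]

lemma lead_fac (t : K) {i j : Fin n} (h : i ≠ j) :
    Lead (fac t i j) (Pi.single (max i j) 1) (if i < j then 1 else -t) := by
  have hne : (Pi.single i 1 : Fin n → ℤ) ≠ Pi.single j 1 := by
    intro h'
    have := congrFun h' i
    simp [h] at this
  have h1 : Lead (AddMonoidAlgebra.single (Pi.single j 1 : Fin n → ℤ) (1 : K)) _ _ :=
    Lead.single _ _
  have h2 : Lead (AddMonoidAlgebra.single (Pi.single i 1 : Fin n → ℤ) (-t)) _ _ :=
    Lead.single _ _
  have h3 : fac t i j = AddMonoidAlgebra.single (Pi.single j 1 : Fin n → ℤ) (1 : K) +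
      AddMonoidAlgebra.single (Pi.single i 1 : Fin n → ℤ) (-t) := by
    rw [fac, AddMonoidAlgebra.single_neg, sub_eq_add_neg]
  rw [h3]
  rcases lt_or_gt_of_ne h with hlt | hlt
  · rw [max_eq_right hlt.le, if_pos hlt]
    simpa using h1.add (h2.of_dle (dle_single hlt.le) hne)
  · rw [max_eq_left hlt.le, if_neg hlt.not_gt]
    simpa using (h1.of_dle (dle_single hlt.le) hne.symm).add h2

lemma lead_DD (t : K) (σ : Equiv.Perm (Fin n)) :
    Lead (actL σ (DD t)) rho
      (∏ i : Fin n, ∏ j ∈ Finset.Ioi i, if σ i < σ j then 1 else -t) := by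
  rw [actL_DD, ← sum_max_perm σ]
  refine Lead.prod _ fun i _ => Lead.prod _ fun j hj => ?_
  exact lead_fac t fun h => (Finset.mem_Ioi.1 hj).ne (σ.injective h)

/-- The alternating sum of the permutations of `z^λ ∏ (z_j - t z_i)`. -/
def NN (t : K) (lam : Fin n → ℤ) : Lau n :=
  ∑ σ : Equiv.Perm (Fin n), sg σ • actL σ (AddMonoidAlgebra.single lam 1 * DD t)

lemma NN_mem_alt (t : K) (lam : Fin n → ℤ) : NN t lam ∈ alt n := by
  intro τ
  unfold NN
  rw [map_sum, Finset.smul_sum,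
    ← Equiv.sum_comp (Equiv.mulLeft τ) (fun σ : Equiv.Perm (Fin n) => sg τ • _)]
  refine Finset.sum_congr rfl fun σ _ => ?_
  rw [map_smul, actL_mul, Equiv.coe_mulLeft, sg_mul, smul_smul, ← mul_assoc, sg_mul_self, one_mul]

open Classical in
/-- The leading coefficient of `NN t lam`. -/
def cc (t : K) (lam : Fin n → ℤ) : K :=
  ∑ σ : Equiv.Perm (Fin n), if lam ∘ σ.symm = lam then
    ∏ i : Fin n, ∏ j ∈ Finset.Ioi i, (if σ i < σ j then 1 else t) else 0

lemma lead_NN (t : K) {lam : Fin n → ℤ} (h : Monotone lam) :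
    Lead (NN t lam) (lam + rho) (cc t lam) := by
  classical
  unfold NN cc
  refine Lead.sum _ fun σ _ => ?_
  have h1 : Lead (actL σ (AddMonoidAlgebra.single lam (1 : K))) lam
      (if lam ∘ σ.symm = lam then 1 else 0) := by
    rw [actL_single]
    split_ifs with h'
    · rw [h']; exact Lead.single _ _
    · exact (Lead.single (lam ∘ σ.symm) (1 : K)).of_dle (dle_perm h σ.symm) h'
  have h2 := (h1.mul (lead_DD t σ)).smul (sg σ)
  rw [map_mul]
  convert h2 using 1
  split_ifs with h'
  · rw [one_mul]
    have : sg σ = ∏ i : Fin n, ∏ j ∈ Finset.Ioi i, if σ i < σ j then 1 else -1 := by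
      unfold sg
      rw [Equiv.Perm.sign_eq_prod_prod_Ioi]
      simp only [Units.coe_prod, Int.cast_prod]
      refine Finset.prod_congr rfl fun i _ => Finset.prod_congr rfl fun j _ => ?_
      split_ifs <;> simp
    rw [this, ← Finset.prod_mul_distrib]
    refine Finset.prod_congr rfl fun i _ => ?_
    rw [← Finset.prod_mul_distrib]
    refine Finset.prod_congr rfl fun j _ => ?_
    split_ifs <;> ring
  · rw [zero_mul, mul_zero]

open Classical in
/-- The leading coefficient as a polynomial in `t`. -/
def cpol (lam : Fin n → ℤ) : Polynomial ℚ :=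
  ∑ σ : Equiv.Perm (Fin n), if lam ∘ σ.symm = lam then
    ∏ i : Fin n, ∏ j ∈ Finset.Ioi i, (if σ i < σ j then 1 else Polynomial.X) else 0

lemma aeval_cpol (t : K) (lam : Fin n → ℤ) : Polynomial.aeval t (cpol lam) = cc t lam := by
  classical
  unfold cpol cc
  simp only [map_sum, map_prod, apply_ite (Polynomial.aeval t), map_zero, map_one,
    Polynomial.aeval_X]

lemma eval_cpol (lam : Fin n → ℤ) : Polynomial.eval 1 (cpol lam) ≠ 0 := by
  classical
  have : Polynomial.eval 1 (cpol lam) =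
      ∑ σ : Equiv.Perm (Fin n), if lam ∘ σ.symm = lam then (1 : ℚ) else 0 := by
    unfold cpol
    simp only [Polynomial.eval_finsetSum, Polynomial.eval_prod, apply_ite (Polynomial.eval (1 : ℚ)),
      Polynomial.eval_zero, Polynomial.eval_one, Polynomial.eval_X, ite_self,
      Finset.prod_const_one]
  rw [this, Finset.sum_boole]
  have h1 : (1 : Equiv.Perm (Fin n)) ∈
      Finset.univ.filter fun σ : Equiv.Perm (Fin n) => lam ∘ σ.symm = lam := by
    simp only [Finset.mem_filter, Finset.mem_univ, true_and]; rfl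
  exact_mod_cast (Finset.card_pos.2 ⟨_, h1⟩).ne'

lemma cc_one_ne (lam : Fin n → ℤ) : cc 1 lam ≠ 0 := by
  rw [← aeval_cpol]
  have : (1 : K) = algebraMap ℚ K 1 := by simp
  rw [this, Polynomial.aeval_algebraMap_apply, Polynomial.coe_aeval_eq_eval]
  exact (map_ne_zero _).2 (eval_cpol lam)

lemma cc_q_ne (lam : Fin n → ℤ) : cc q⁻¹ lam ≠ 0 := by
  rw [← aeval_cpol]
  intro h
  have h0 : cpol lam ≠ 0 := by
    intro h'
    apply eval_cpol lam
    rw [h']; simp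
  have h1 : IsAlgebraic ℚ (q⁻¹ : K) := ⟨_, h0, h⟩
  refine RatFunc.transcendental_X (K := ℚ) ?_
  convert IsAlgebraic.inv_iff.1 h1
  exact Subsingleton.elim _ _

/-! ### Triangularity -/

lemma exists_max {α : Type*} (f : α → Fin n → ℤ) (hf : Function.Injective f) (s : Finset α)
    (hs : s.Nonempty) : ∃ a ∈ s, ∀ b ∈ s, dle (f a) (f b) → b = a := by
  letI : PartialOrder α :=
    { le := fun a b => dle (f a) (f b)
      le_refl := fun _ => dle_refl _
      le_trans := fun _ _ _ => dle_trans
      le_antisymm := fun _ _ h h' => hf (dle_antisymm h h') }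
  obtain ⟨a, ha⟩ := s.exists_maximal hs
  exact ⟨a, ha.1, fun b hb hab => hf (dle_antisymm (ha.2 hb hab) hab)⟩

lemma span_NN {t : K} (ht : ∀ lam : Fin n → ℤ, cc t lam ≠ 0) {p : Lau n} (hp : p ∈ alt n) :
    p ∈ Submodule.span K
      (Set.range fun lam : {lam : Fin n → ℤ // Monotone lam} => NN t lam.1) := by
  classical
  have main : ∀ m : ℕ, ∀ s : Finset (Fin n → ℤ), s.card = m → (∀ a ∈ s, Monotone a) →
      (∀ a ∈ s, ∀ b, Monotone b → dle b a → b ∈ s) →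
      ∀ p ∈ alt n, (∀ a, Monotone a → p.coeff (a + rho) ≠ 0 → a ∈ s) →
      p ∈ Submodule.span K
        (Set.range fun lam : {lam : Fin n → ℤ // Monotone lam} => NN t lam.1) := by
    intro m
    induction m with
    | zero =>
      intro s hs _ _ p hp hps
      have : p = 0 := by
        refine alt_eq_zero hp fun v hv => ?_
        by_contra hne
        have := hps (v - rho) (monotone_sub_rho hv) (by simpa using hne)
        rw [Finset.card_eq_zero.1 hs] at this
        simp at this
      rw [this]; exact Submodule.zero_mem _
    | succ m ih =>
      intro s hs hmono hlow p hp hps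
      obtain ⟨a, ha, hmax⟩ : ∃ a ∈ s, ∀ b ∈ s, dle a b → b = a := by
        exact exists_max id Function.injective_id s (Finset.card_pos.1 (by omega))
      have hlead := lead_NN t (hmono a ha)
      set d := p.coeff (a + rho) / cc t a
      have hN : NN t a ∈ Submodule.span K
          (Set.range fun lam : {lam : Fin n → ℤ // Monotone lam} => NN t lam.1) :=
        Submodule.subset_span ⟨⟨a, hmono a ha⟩, rfl⟩
      have hrec : p - d • NN t a ∈ Submodule.span K
          (Set.range fun lam : {lam : Fin n → ℤ // Monotone lam} => NN t lam.1) := by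
        refine ih (s.erase a) (by rw [Finset.card_erase_of_mem ha]; omega)
          (fun b hb => hmono b (Finset.mem_of_mem_erase hb)) ?_ _
          (Submodule.sub_mem _ hp (Submodule.smul_mem _ _ (NN_mem_alt t a))) ?_
        · intro b hb c hc hcb
          refine Finset.mem_erase.2 ⟨?_, hlow b (Finset.mem_of_mem_erase hb) c hc hcb⟩
          rintro rfl
          exact (Finset.ne_of_mem_erase hb) (hmax b (Finset.mem_of_mem_erase hb) hcb)
        · intro b hb hne
          rw [AddMonoidAlgebra.coeff_sub, Finsupp.sub_apply,
            AddMonoidAlgebra.coeff_smul_apply, smul_eq_mul] at hne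
          refine Finset.mem_erase.2 ⟨?_, ?_⟩
          · rintro rfl
            apply hne
            rw [hlead.2, div_mul_cancel₀ _ (ht b), sub_self]
          · by_cases h1 : p.coeff (b + rho) = 0
            · have h2 : (NN t a).coeff (b + rho) ≠ 0 := by
                intro h2; rw [h1, h2] at hne; simp at hne
              exact hlow a ha b hb (dle_of_add_right (hlead.1 _ h2))
            · exact hps b hb h1
      have := Submodule.add_mem _ hrec (Submodule.smul_mem _ d hN)
      simpa using this
  have hfin : (⋃ v ∈ p.coeff.support,
      {a : Fin n → ℤ | Monotone a ∧ dle a (v - rho)}).Finite :=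
    Set.Finite.biUnion (Finset.finite_toSet _) fun v _ => finite_dle _
  refine main _ hfin.toFinset rfl ?_ ?_ p hp ?_
  · intro a ha
    rw [Set.Finite.mem_toFinset] at ha
    simp only [Set.mem_iUnion] at ha
    obtain ⟨v, hv, ha, _⟩ := ha
    exact ha
  · intro a ha b hb hba
    rw [Set.Finite.mem_toFinset] at ha ⊢
    simp only [Set.mem_iUnion] at ha ⊢
    obtain ⟨v, hv, ha, hav⟩ := ha
    exact ⟨v, hv, hb, dle_trans hba hav⟩
  · intro a ha hne
    rw [Set.Finite.mem_toFinset]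
    simp only [Set.mem_iUnion]
    refine ⟨a + rho, Finsupp.mem_support_iff.2 hne, ha, ?_⟩
    rw [add_sub_cancel_right]; exact dle_refl _

lemma linearIndependent_NN {t : K} (ht : ∀ lam : Fin n → ℤ, cc t lam ≠ 0) :
    LinearIndependent K (fun lam : {lam : Fin n → ℤ // Monotone lam} => NN t lam.1) := by
  classical
  rw [linearIndependent_iff']
  intro s g hg
  by_contra hcon
  push Not at hcon
  obtain ⟨i0, hi0, hgi0⟩ := hcon
  set s' := s.filter fun i => g i ≠ 0
  obtain ⟨a, ha, hmax⟩ : ∃ a ∈ s', ∀ b ∈ s', dle a.1 b.1 → b = a := by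
    exact exists_max _ Subtype.val_injective s' ⟨i0, Finset.mem_filter.2 ⟨hi0, hgi0⟩⟩
  have h1 := congrArg (fun p : Lau n => p.coeff (a.1 + rho)) hg
  rw [AddMonoidAlgebra.coeff_sum, Finsupp.finsetSum_apply, AddMonoidAlgebra.coeff_zero,
    Finsupp.zero_apply, Finset.sum_eq_single a] at h1
  · rw [AddMonoidAlgebra.coeff_smul_apply, (lead_NN t a.2).2, smul_eq_mul] at h1
    exact mul_ne_zero (Finset.mem_filter.1 ha).2 (ht _) h1
  · intro b hb hba
    rw [AddMonoidAlgebra.coeff_smul_apply, smul_eq_mul]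
    by_contra hne
    have h2 := left_ne_zero_of_mul hne
    have h3 := dle_of_add_right ((lead_NN t b.2).1 _ (right_ne_zero_of_mul hne))
    exact hba (hmax b (Finset.mem_filter.2 ⟨hb, h2⟩) h3)
  · intro h
    exact absurd (Finset.mem_filter.1 ha).1 h

/-! ### Division by the Vandermonde product -/

lemma single_ne {i j : Fin n} (h : i ≠ j) : (Pi.single i 1 : Fin n → ℤ) ≠ Pi.single j 1 := by
  intro h'
  have := congrFun h' i
  simp [h] at this

lemma fac_eq (t : K) (i j : Fin n) :
    fac t i j = AddMonoidAlgebra.single (Pi.single j 1) 1 *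
      (1 - AddMonoidAlgebra.single (eu i j) t) := by
  rw [fac, mul_sub, mul_one, AddMonoidAlgebra.single_mul_single, one_mul, eu, add_sub_cancel]

lemma fac_one_ne {i j : Fin n} (h : i ≠ j) : fac 1 i j ≠ 0 := by
  unfold fac
  rw [sub_ne_zero]
  intro h'
  exact single_ne h.symm (AddMonoidAlgebra.single_left_injective one_ne_zero h')

lemma DD_one_ne : (DD 1 : Lau n) ≠ 0 := by
  unfold DD
  refine Finset.prod_ne_zero_iff.2 fun i _ => Finset.prod_ne_zero_iff.2 fun j hj => ?_
  exact fac_one_ne (Finset.mem_Ioi.1 hj).ne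

lemma alg_injective : Function.Injective (alg : Lau n → FF n) :=
  IsFractionRing.injective (Lau n) (FF n)

lemma alg_DD_mul_Pfun (lam : Fin n → ℤ) : alg (DD 1) * Pfun lam = alg (NN q⁻¹ lam) := by
  have hprod : alg (DD 1 : Lau n) * ∏ i : Fin n, ∏ j ∈ Finset.Ioi i,
        (alg (1 - AddMonoidAlgebra.single (eu i j) q⁻¹)
          * (alg (1 - AddMonoidAlgebra.single (eu i j) 1))⁻¹) = alg (DD q⁻¹ : Lau n) := by
    unfold DD
    simp only [map_prod]
    rw [← Finset.prod_mul_distrib]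
    refine Finset.prod_congr rfl fun i _ => ?_
    rw [← Finset.prod_mul_distrib]
    refine Finset.prod_congr rfl fun j hj => ?_
    have hne := fac_one_ne (Finset.mem_Ioi.1 hj).ne
    rw [fac_eq] at hne
    have h1 : alg (1 - AddMonoidAlgebra.single (eu i j) (1 : K)) ≠ 0 := by
      intro h
      refine right_ne_zero_of_mul hne (alg_injective ?_)
      rw [h, map_zero]
    rw [fac_eq, fac_eq, map_mul, map_mul, mul_assoc]
    congr 1
    rw [mul_left_comm, mul_inv_cancel₀ h1, mul_one]
  unfold Pfun NN
  rw [Finset.mul_sum, map_sum]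
  refine Finset.sum_congr rfl fun σ _ => ?_
  have hD : (DD 1 : Lau n) = sg σ • actL σ (DD 1) := by
    rw [actL_DD_one, smul_smul, sg_mul_self, one_smul]
  rw [hD, sg_smul, sg_smul, map_mul alg, map_mul alg, mul_assoc]
  congr 1
  rw [← actF_alg, ← actF_alg, ← map_mul, mul_left_comm, hprod, map_mul alg]

lemma NN_one (lam : Fin n → ℤ) :
    NN 1 lam = DD 1 * ∑ σ : Equiv.Perm (Fin n), actL σ (AddMonoidAlgebra.single lam 1) := by
  unfold NN
  rw [Finset.mul_sum]
  refine Finset.sum_congr rfl fun σ _ => ?_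
  rw [map_mul, actL_DD_one, mul_smul_comm, smul_smul, sg_mul_self, one_smul, mul_comm]

lemma orbit_mem (lam : Fin n → ℤ) :
    ∑ σ : Equiv.Perm (Fin n), actL σ (AddMonoidAlgebra.single lam 1) ∈ invariants n := by
  intro τ
  rw [map_sum, ← Equiv.sum_comp (Equiv.mulLeft τ) (fun σ : Equiv.Perm (Fin n) => actL σ _)]
  refine Finset.sum_congr rfl fun σ _ => ?_
  rw [actL_mul, Equiv.coe_mulLeft]

/-- Multiplication by the Vandermonde product on invariants. -/
def mulDD (n : ℕ) : invariants n →ₗ[K] Lau n :=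
  (LinearMap.mulLeft K (DD 1 : Lau n)).comp (invariants n).subtype

lemma mulDD_apply (p : invariants n) : mulDD n p = DD 1 * (p : Lau n) := rfl

lemma mulDD_injective : Function.Injective (mulDD n) := by
  intro p r h
  rw [mulDD_apply, mulDD_apply] at h
  exact Subtype.ext (mul_left_cancel₀ DD_one_ne h)

lemma mulDD_mem (p : invariants n) : mulDD n p ∈ alt n := by
  intro σ
  rw [mulDD_apply, map_mul, actL_DD_one, mem_invariants.1 p.2 σ, smul_mul_assoc]

lemma exists_mulDD {p : Lau n} (hp : p ∈ alt n) : ∃ r : invariants n, mulDD n r = p := by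
  have h := span_NN cc_one_ne hp
  have : Submodule.span K
      (Set.range fun lam : {lam : Fin n → ℤ // Monotone lam} => NN 1 lam.1) ≤
      LinearMap.range (mulDD n) := by
    rw [Submodule.span_le]
    rintro _ ⟨lam, rfl⟩
    exact ⟨⟨_, orbit_mem lam.1⟩, (NN_one lam.1).symm⟩
  exact this h

/-- The `P_λ` for antidominant `λ` (i.e. `λ₁ ≤ ⋯ ≤ λ_n`) all lie in `L_n` — in fact in the
`S_n`-invariants — and they form a `K`-basis (a linearly independent spanning family) of
the space of `S_n`-invariant elements of `L_n`. -/
theorem Pfun_antidominant_basis_of_invariants (n : ℕ) :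
    ∃ Q : {lam : Fin n → ℤ // Monotone lam} → invariants n,
      (∀ lam : {lam : Fin n → ℤ // Monotone lam}, alg (Q lam : Lau n) = Pfun lam.1) ∧
      LinearIndependent K Q ∧
      Submodule.span K (Set.range Q) = ⊤ := by
  choose Q hQ using fun lam : {lam : Fin n → ℤ // Monotone lam} =>
    exists_mulDD (NN_mem_alt q⁻¹ lam.1)
  have hcomp : (mulDD n) ∘ Q = fun lam : {lam : Fin n → ℤ // Monotone lam} => NN q⁻¹ lam.1 :=
    funext hQ
  refine ⟨Q, ?_, ?_, ?_⟩
  · intro lam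
    have h0 : alg (DD 1 : Lau n) ≠ 0 := by
      intro h
      exact DD_one_ne (alg_injective (by rw [h, map_zero]))
    apply mul_left_cancel₀ h0
    rw [alg_DD_mul_Pfun, ← map_mul, ← mulDD_apply, hQ]
  · apply LinearIndependent.of_comp (mulDD n)
    rw [hcomp]
    exact linearIndependent_NN cc_q_ne
  · rw [eq_top_iff]
    intro p _
    have h := span_NN cc_q_ne (mulDD_mem p)
    rw [← hcomp, Set.range_comp, ← Submodule.map_span] at h
    obtain ⟨r, hr, hrp⟩ := h
    rw [← mulDD_injective hrp]
    exact hr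

end InverseSatake
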